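/- A 0-1 incomplete symmetric matrix A (all non-missing entries equal to 0 or 1) is Strong-Robinsonian if and only if A has a Robinsonian completion with values in {0,1}. -/

import Mathlib

/-- An incomplete matrix (entries in `Option ℝ`, `none` = missing) is symmetric. -/
def IsSymmetricOpt {n : ℕ} (A : Fin n → Fin n → Option ℝ) : Prop :=
  ∀ i j, A j i = A i j

/-- Incomplete Robinson: non-missing entries do not decrease along rows and
columns when moving toward the main diagonal. -/
def IsRobinsonOpt {n : ℕ} (A : Fin n → Fin n → Option ℝ) : Prop :=
  (∀ i k j : Fin n, i ≤ k → k ≤ j →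
    ∀ x y : ℝ, A i j = some x → A i k = some y → x ≤ y) ∧
  (∀ i l j : Fin n, i ≤ l → l ≤ j →
    ∀ x y : ℝ, A i j = some x → A l j = some y → x ≤ y)

/-- Incomplete Strong-Robinson: `a_{i,j} ≤ a_{k,l}` whenever
`i ≤ k ≤ l ≤ j` and both entries are non-missing. -/
def IsStrongRobinsonOpt {n : ℕ} (A : Fin n → Fin n → Option ℝ) : Prop :=
  ∀ i k l j : Fin n, i ≤ k → k ≤ l → l ≤ j →
    ∀ x y : ℝ, A i j = some x → A k l = some y → x ≤ y

/-- Incomplete Robinsonian: some simultaneous permutation of rows and columns is Robinson. -/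
def IsRobinsonianOpt {n : ℕ} (A : Fin n → Fin n → Option ℝ) : Prop :=
  ∃ π : Equiv.Perm (Fin n), IsRobinsonOpt (fun i j => A (π i) (π j))

/-- Incomplete Strong-Robinsonian. -/
def IsStrongRobinsonianOpt {n : ℕ} (A : Fin n → Fin n → Option ℝ) : Prop :=
  ∃ π : Equiv.Perm (Fin n), IsStrongRobinsonOpt (fun i j => A (π i) (π j))

/-- Complete Robinson matrix. -/
def IsRobinson {n : ℕ} (B : Fin n → Fin n → ℝ) : Prop :=
  (∀ i k j : Fin n, i ≤ k → k ≤ j → B i j ≤ B i k) ∧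
  (∀ i l j : Fin n, i ≤ l → l ≤ j → B i j ≤ B l j)

/-- Complete Robinsonian matrix. -/
def IsRobinsonian {n : ℕ} (B : Fin n → Fin n → ℝ) : Prop :=
  ∃ π : Equiv.Perm (Fin n), IsRobinson (fun i j => B (π i) (π j))

/-- `B` is a (symmetric) completion of the incomplete matrix `A`. -/
def IsCompletion {n : ℕ} (A : Fin n → Fin n → Option ℝ) (B : Fin n → Fin n → ℝ) : Prop :=
  (∀ i j, B j i = B i j) ∧ ∀ i j (x : ℝ), A i j = some x → B i j = x

/-- `w(A)`: the set of values appearing among the non-missing entries of `A`. -/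
def valueSet {n : ℕ} (A : Fin n → Fin n → Option ℝ) : Set ℝ :=
  {x | ∃ i j, A i j = some x}

/-! Once the rows and columns are in a Strong-Robinson order, fill every position `(i, j)` with the
largest known entry `a_{p,q}` whose interval `[p, q]` contains `i` and `j`, or with a common lower
bound of the known entries if there is none. By the Strong-Robinson property a known entry is the
largest among those enclosing it, so no known entry is changed; shrinking an interval only adds
enclosing entries, so the filled matrix is Robinson. All values used are known entries or the lower
bound, which can itself be taken among the known entries if there are any. -/

section Completion

variable {n : ℕ} {A : Fin n → Fin n → Option ℝ} {B : Fin n → Fin n → ℝ} {d : ℝ}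

theorem isCompletion_perm_iff (π : Equiv.Perm (Fin n)) :
    IsCompletion (fun i j => A (π i) (π j)) (fun i j => B (π i) (π j)) ↔ IsCompletion A B :=
  and_congr (π.surjective.forall₂ (p := fun i j => B j i = B i j)).symm
    (π.surjective.forall₂ (p := fun i j => ∀ x : ℝ, A i j = some x → B i j = x)).symm

theorem valueSet_perm (A : Fin n → Fin n → Option ℝ) (π : Equiv.Perm (Fin n)) :
    valueSet (fun i j => A (π i) (π j)) = valueSet A :=
  Set.ext fun x => (π.surjective.exists₂ (p := fun i j => A i j = some x)).symm

theorem IsRobinson.le_of_nested (hB : IsRobinson B) {i k l j : Fin n}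
    (hik : i ≤ k) (hkl : k ≤ l) (hlj : l ≤ j) : B i j ≤ B k l :=
  (hB.1 i l j (hik.trans hkl) hlj).trans (hB.2 i k l hik hkl)

theorem IsCompletion.isStrongRobinsonOpt (hAB : IsCompletion A B) (hB : IsRobinson B) :
    IsStrongRobinsonOpt A := by
  intro i k l j hik hkl hlj x y hx hy
  rw [← hAB.2 i j x hx, ← hAB.2 k l y hy]
  exact hB.le_of_nested hik hkl hlj

theorem finite_valueSet (A : Fin n → Fin n → Option ℝ) : (valueSet A).Finite := by
  have h : valueSet A = some ⁻¹' Set.range fun p : Fin n × Fin n => A p.1 p.2 := by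
    ext x
    simp [valueSet]
  rw [h]
  exact (Set.finite_range _).preimage (Option.some_injective ℝ).injOn

theorem exists_mem_lowerBounds_valueSet {S : Set ℝ} (hS : S.Nonempty) (hAS : valueSet A ⊆ S) :
    ∃ d ∈ S, d ∈ lowerBounds (valueSet A) := by
  rcases (valueSet A).eq_empty_or_nonempty with hempty | hne
  · obtain ⟨d, hd⟩ := hS
    exact ⟨d, hd, by simp [hempty]⟩
  · have hfin := finite_valueSet A
    exact ⟨sInf (valueSet A), hAS (hne.csInf_mem hfin), fun _ hx => csInf_le hfin.bddBelow hx⟩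

/-- The known entries of `A` at positions `(p, q)` whose interval `[p, q]` contains both `i` and
`j`. Using the unordered interval `Set.uIcc i j` makes this symmetric in `i` and `j`. -/
def enclosingValues (A : Fin n → Fin n → Option ℝ) (i j : Fin n) : Set ℝ :=
  {x | ∃ p q, Set.uIcc i j ⊆ Set.Icc p q ∧ A p q = some x}

theorem enclosingValues_comm (A : Fin n → Fin n → Option ℝ) (i j : Fin n) :
    enclosingValues A j i = enclosingValues A i j := by
  simp only [enclosingValues, Set.uIcc_comm]

theorem enclosingValues_subset_valueSet (A : Fin n → Fin n → Option ℝ) (i j : Fin n) :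
    enclosingValues A i j ⊆ valueSet A :=
  fun _ ⟨p, q, _, hx⟩ => ⟨p, q, hx⟩

theorem finite_insert_enclosingValues (A : Fin n → Fin n → Option ℝ) (d : ℝ) (i j : Fin n) :
    (insert d (enclosingValues A i j)).Finite :=
  ((finite_valueSet A).subset (enclosingValues_subset_valueSet A i j)).insert d

theorem enclosingValues_subset_of_uIcc_subset {i k l j : Fin n}
    (h : Set.uIcc k l ⊆ Set.uIcc i j) : enclosingValues A i j ⊆ enclosingValues A k l :=
  fun _ ⟨p, q, hpq, hx⟩ => ⟨p, q, h.trans hpq, hx⟩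

theorem IsStrongRobinsonOpt.isGreatest_enclosingValues (hA : IsStrongRobinsonOpt A) {i j : Fin n}
    (hij : i ≤ j) {x : ℝ} (hx : A i j = some x) : IsGreatest (enclosingValues A i j) x := by
  refine ⟨⟨i, j, (Set.uIcc_of_le hij).subset, hx⟩, ?_⟩
  rintro y ⟨p, q, hpq, hy⟩
  have hpi : p ≤ i := (hpq Set.left_mem_uIcc).1
  have hjq : j ≤ q := (hpq Set.right_mem_uIcc).2
  exact hA p i j q hpi hij hjq y x hy hx

/-- The completion of `A` by largest enclosing values, with default `d` at the positions enclosed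
by no known entry. It is meant for `d` below all known entries, so that including `d` in the
supremum does not affect the other positions. -/
noncomputable def envelope (A : Fin n → Fin n → Option ℝ) (d : ℝ) (i j : Fin n) : ℝ :=
  sSup (insert d (enclosingValues A i j))

theorem envelope_comm (A : Fin n → Fin n → Option ℝ) (d : ℝ) (i j : Fin n) :
    envelope A d j i = envelope A d i j := by
  rw [envelope, envelope, enclosingValues_comm]

theorem envelope_mem_insert_valueSet (A : Fin n → Fin n → Option ℝ) (d : ℝ) (i j : Fin n) :
    envelope A d i j ∈ insert d (valueSet A) :=
  Set.insert_subset_insert (enclosingValues_subset_valueSet A i j) <|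
    (Set.insert_nonempty _ _).csSup_mem (finite_insert_enclosingValues A d i j)

theorem envelope_le_of_uIcc_subset {i k l j : Fin n} (h : Set.uIcc k l ⊆ Set.uIcc i j) :
    envelope A d i j ≤ envelope A d k l :=
  csSup_le_csSup (finite_insert_enclosingValues A d k l).bddAbove (Set.insert_nonempty _ _)
    (Set.insert_subset_insert (enclosingValues_subset_of_uIcc_subset h))

theorem isRobinson_envelope (A : Fin n → Fin n → Option ℝ) (d : ℝ) : IsRobinson (envelope A d) :=
  ⟨fun _ _ _ hik hkj => envelope_le_of_uIcc_subset
      (Set.uIcc_subset_uIcc_left (Set.mem_uIcc_of_le hik hkj)),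
    fun _ _ _ hil hlj => envelope_le_of_uIcc_subset
      (Set.uIcc_subset_uIcc_right (Set.mem_uIcc_of_le hil hlj))⟩

theorem IsStrongRobinsonOpt.envelope_eq (hA : IsStrongRobinsonOpt A)
    (hd : d ∈ lowerBounds (valueSet A)) {i j : Fin n} (hij : i ≤ j) {x : ℝ}
    (hx : A i j = some x) : envelope A d i j = x := by
  have hdx : d ≤ x := hd ⟨i, j, hx⟩
  have hmax := (hA.isGreatest_enclosingValues hij hx).insert d
  rw [max_eq_right hdx] at hmax
  exact hmax.csSup_eq

theorem IsStrongRobinsonOpt.isCompletion_envelope (hA : IsStrongRobinsonOpt A)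
    (hsymm : IsSymmetricOpt A) (hd : d ∈ lowerBounds (valueSet A)) :
    IsCompletion A (envelope A d) := by
  refine ⟨envelope_comm A d, fun i j x hx => ?_⟩
  rcases le_total i j with hij | hji
  · exact hA.envelope_eq hd hij hx
  · rw [envelope_comm]
    exact hA.envelope_eq hd hji ((hsymm i j).trans hx)

theorem IsStrongRobinsonOpt.exists_isRobinson_completion (hA : IsStrongRobinsonOpt A)
    (hsymm : IsSymmetricOpt A) {S : Set ℝ} (hS : S.Nonempty) (hAS : valueSet A ⊆ S) :
    ∃ B : Fin n → Fin n → ℝ, IsCompletion A B ∧ (∀ i j, B i j ∈ S) ∧ IsRobinson B := by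
  obtain ⟨d, hdS, hd⟩ := exists_mem_lowerBounds_valueSet hS hAS
  exact ⟨envelope A d, hA.isCompletion_envelope hsymm hd,
    fun i j => Set.insert_subset hdS hAS (envelope_mem_insert_valueSet A d i j),
    isRobinson_envelope A d⟩

end Completion

theorem stmt13_general {n : ℕ} (A : Fin n → Fin n → Option ℝ) (hA : IsSymmetricOpt A)
    {S : Set ℝ} (hS : S.Nonempty) (hAS : valueSet A ⊆ S) :
    IsStrongRobinsonianOpt A ↔
      ∃ B : Fin n → Fin n → ℝ, IsCompletion A B ∧
        (∀ i j, A i j = none → B i j ∈ S) ∧ IsRobinsonian B := by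
  constructor
  · rintro ⟨π, hπ⟩
    obtain ⟨C, hAC, hCS, hC⟩ := hπ.exists_isRobinson_completion
      (fun i j => hA (π i) (π j)) hS ((valueSet_perm A π).trans_subset hAS)
    refine ⟨fun i j => C (π.symm i) (π.symm j), (isCompletion_perm_iff π).1 ?_,
      fun _ _ _ => hCS _ _, π, ?_⟩
    · simpa only [Equiv.symm_apply_apply] using hAC
    · simpa only [Equiv.symm_apply_apply] using hC
  · rintro ⟨B, hAB, -, π, hB⟩
    exact ⟨π, ((isCompletion_perm_iff π).2 hAB).isStrongRobinsonOpt hB⟩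

/-- A 0-1 incomplete symmetric matrix is Strong-Robinsonian iff it has a
Robinsonian completion with values in `{0,1}`. -/
theorem stmt13 {n : ℕ} (A : Fin n → Fin n → Option ℝ) (hA : IsSymmetricOpt A)
    (h01 : ∀ i j (x : ℝ), A i j = some x → x = 0 ∨ x = 1) :
    IsStrongRobinsonianOpt A ↔
      ∃ B : Fin n → Fin n → ℝ, IsCompletion A B ∧
        (∀ i j, A i j = none → B i j ∈ ({0, 1} : Set ℝ)) ∧ IsRobinsonian B :=
  stmt13_general A hA (Set.insert_nonempty 0 {1}) fun x ⟨i, j, hx⟩ => h01 i j x hx
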